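/- arXiv:0910.2386 — 2 statements merged into one kernel-verified Lean document; each statement's English description precedes it below -/
import Mathlib

section
/- The Witten index localizes on the ground states: dim V⁺ − dim V⁻ = dim(ker H ∩ V⁺) − dim(ker H ∩ V⁻). Consequently |dim V⁺ − dim V⁻| is a lower bound on the number of zero-energy ground states: |dim V⁺ − dim V⁻| ≤ dim ker H. -/
theorem aux_rank {W : Type*} [NormedAddCommGroup W] [InnerProductSpace ℂ W]
    [FiniteDimensional ℂ W] (D : W →ₗ[ℂ] W) (p : Submodule ℂ W) :
    Module.finrank ℂ (p.map D) + Module.finrank ℂ ↥(LinearMap.ker D ⊓ p) =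
      Module.finrank ℂ p := by
  have h := LinearMap.finrank_range_add_finrank_ker (D.domRestrict p)
  have h1 : LinearMap.range (D.domRestrict p) = p.map D := by
    ext y; simp [LinearMap.mem_range, Submodule.mem_map]
  have h2 : (LinearMap.ker (D.domRestrict p)).map p.subtype = LinearMap.ker D ⊓ p := by
    ext y
    simp [Submodule.mem_map]
  rw [h1] at h
  rw [← h2, Submodule.finrank_map_subtype_eq]
  exact h

theorem aux_le {W : Type*} [NormedAddCommGroup W] [InnerProductSpace ℂ W]
    [FiniteDimensional ℂ W] (D : W →ₗ[ℂ] W) (p q : Submodule ℂ W)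
    (hD : ∀ x, D (D x) = 0 → D x = 0) (hpq : ∀ x ∈ p, D x ∈ q) :
    Module.finrank ℂ (p.map D) ≤ Module.finrank ℂ (q.map D) := by
  have h := aux_rank D (p.map D)
  have h0 : LinearMap.ker D ⊓ p.map D = ⊥ := by
    rw [eq_bot_iff]
    rintro _ ⟨h1, x, hx, rfl⟩
    exact hD x h1
  rw [h0, finrank_bot] at h
  have h3 : (p.map D).map D ≤ q.map D := by
    apply Submodule.map_mono
    rintro _ ⟨x, hx, rfl⟩
    exact hpq x hx
  have := Submodule.finrank_mono h3
  omega

/-- The Witten index localizes on the ground states: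
`dim V⁺ − dim V⁻ = dim(ker H ∩ V⁺) − dim(ker H ∩ V⁻)`, and consequently
`|dim V⁺ − dim V⁻| ≤ dim ker H`. -/
theorem witten_index_localizes
    {W : Type*} [NormedAddCommGroup W] [InnerProductSpace ℂ W] [FiniteDimensional ℂ W]
    (Vp Vf : Submodule ℂ W) (horth : Vf = Vpᗮ)
    (Q : W →ₗ[ℂ] W)
    (hQp : ∀ x ∈ Vp, Q x ∈ Vf) (hQf : ∀ x ∈ Vf, Q x ∈ Vp)
    (hQ2 : Q ∘ₗ Q = 0) :
    (Module.finrank ℂ Vp : ℤ) - Module.finrank ℂ Vf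
      = (Module.finrank ℂ
          ↥(LinearMap.ker (Q ∘ₗ LinearMap.adjoint Q + LinearMap.adjoint Q ∘ₗ Q) ⊓ Vp) : ℤ)
        - Module.finrank ℂ
          ↥(LinearMap.ker (Q ∘ₗ LinearMap.adjoint Q + LinearMap.adjoint Q ∘ₗ Q) ⊓ Vf) ∧
    |(Module.finrank ℂ Vp : ℤ) - Module.finrank ℂ Vf|
      ≤ Module.finrank ℂ
          ↥(LinearMap.ker (Q ∘ₗ LinearMap.adjoint Q + LinearMap.adjoint Q ∘ₗ Q)) := by
  have hQQ : ∀ x, Q (Q x) = 0 := fun x => LinearMap.congr_fun hQ2 x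
  have hAA : ∀ x, LinearMap.adjoint Q (LinearMap.adjoint Q x) = 0 := by
    intro x
    apply ext_inner_left ℂ
    intro v
    rw [LinearMap.adjoint_inner_right, LinearMap.adjoint_inner_right, hQQ]
    simp
  have hAp : ∀ x ∈ Vp, LinearMap.adjoint Q x ∈ Vf := by
    intro x hx
    rw [horth, Submodule.mem_orthogonal]
    intro u hu
    rw [LinearMap.adjoint_inner_right]
    have := hQp u hu
    rw [horth] at this
    exact Submodule.inner_left_of_mem_orthogonal hx this
  have hAf : ∀ x ∈ Vf, LinearMap.adjoint Q x ∈ Vp := by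
    intro x hx
    rw [← Submodule.orthogonal_orthogonal Vp, ← horth, Submodule.mem_orthogonal]
    intro u hu
    rw [LinearMap.adjoint_inner_right]
    rw [horth] at hx
    exact Submodule.inner_right_of_mem_orthogonal (hQf u hu) hx
  set H := Q ∘ₗ LinearMap.adjoint Q + LinearMap.adjoint Q ∘ₗ Q with hH
  let D : W →ₗ[ℂ] W := Q + LinearMap.adjoint Q
  have hDH : ∀ x, D (D x) = H x := by
    intro x
    simp [D, hH, hQQ, hAA]
  have hDD : ∀ x, D (D x) = 0 → D x = 0 := by
    intro x hx
    have hs : inner ℂ (D x) (D x) = inner ℂ x (D (D x)) := by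
      have : ∀ y, inner ℂ (D x) y = inner ℂ x (D y) := by
        intro y
        simp only [D, LinearMap.add_apply, inner_add_left, inner_add_right,
          LinearMap.adjoint_inner_right, LinearMap.adjoint_inner_left]
        ring
      exact this _
    rw [hx, inner_zero_right] at hs
    exact inner_self_eq_zero.mp hs
  have hker : LinearMap.ker H = LinearMap.ker D := by
    ext x
    rw [LinearMap.mem_ker, LinearMap.mem_ker, ← hDH]
    exact ⟨hDD x, fun h => by rw [h, map_zero]⟩
  rw [hker]
  have a1 := aux_rank D Vp
  have a2 := aux_rank D Vf
  have b1 := aux_le D Vp Vf hDD (fun x hx => Vf.add_mem (hQp x hx) (hAp x hx))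
  have b2 := aux_le D Vf Vp hDD (fun x hx => Vp.add_mem (hQf x hx) (hAf x hx))
  have c1 := Submodule.finrank_mono (inf_le_left : LinearMap.ker D ⊓ Vp ≤ LinearMap.ker D)
  have c2 := Submodule.finrank_mono (inf_le_left : LinearMap.ker D ⊓ Vf ≤ LinearMap.ker D)
  refine ⟨by omega, ?_⟩
  rw [abs_le]
  constructor <;> omega
end

section
/- The Witten index of the supersymmetric hard-core fermion model equals the independence polynomial of the graph evaluated at −1: dim(ker H ∩ bosonic subspace) − dim(ker H ∩ fermionic subspace) = Σ_I (−1)^{|I|}, where the sum runs over all independent sets I of G (including the empty set). -/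
/-! ### The supersymmetric hard-core fermion model on a graph

For a finite simple graph `G` with totally ordered vertex set, the Hilbert space has an
orthonormal basis `{|I⟩ : I an independent set of G}`, the supercharge acts by
`Q|I⟩ = Σ_v ε(v,I) |I ∪ {v}⟩` (sum over `v ∉ I` with `I ∪ {v}` independent,
`ε(v,I) = (−1)^{#{w ∈ I : w < v}}`), and the Hamiltonian is `H = Q Q† + Q† Q`. -/

open scoped BigOperators

/-- A finite set of vertices is independent if it contains no edge of `G`. -/
def Indep {V : Type*} (G : SimpleGraph V) (I : Finset V) : Prop :=
  ∀ ⦃a⦄, a ∈ I → ∀ ⦃b⦄, b ∈ I → ¬ G.Adj a b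

lemma Indep.mono {V : Type*} {G : SimpleGraph V} {I J : Finset V}
    (hI : Indep G I) (hJI : J ⊆ I) : Indep G J :=
  fun _ ha _ hb => hI (hJI ha) (hJI hb)

/-- The independent sets of `G`, indexing the orthonormal basis of the Hilbert space. -/
def IndepSet {V : Type*} (G : SimpleGraph V) : Type _ := {I : Finset V // Indep G I}

noncomputable instance {V : Type*} [Fintype V] [LinearOrder V] (G : SimpleGraph V) :
    Fintype (IndepSet G) := by
  classical exact Subtype.fintype _

instance {V : Type*} [LinearOrder V] (G : SimpleGraph V) : DecidableEq (IndepSet G) := by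
  unfold IndepSet; infer_instance

/-- The Hilbert space `ℋ_G` of the hard-core fermion model: one orthonormal basis state
`|I⟩` for every independent set `I` of `G`. -/
noncomputable abbrev FockSpace {V : Type*} [Fintype V] [LinearOrder V] (G : SimpleGraph V) :=
  EuclideanSpace ℂ (IndepSet G)

/-- The fermionic sign `ε(v, I) = (−1)^{#{w ∈ I : w < v}}`. -/
def fsign {V : Type*} [LinearOrder V] (I : Finset V) (v : V) : ℂ :=
  (-1) ^ (I.filter (· < v)).card

/-- The supercharge `Q`, with `Q|I⟩ = Σ_v ε(v,I) |I ∪ {v}⟩` over vertices `v ∉ I` such that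
`I ∪ {v}` is independent; equivalently `(Qψ)(J) = Σ_{v ∈ J} ε(v, J∖{v}) ψ(J∖{v})`. -/
noncomputable def supercharge {V : Type*} [Fintype V] [LinearOrder V] (G : SimpleGraph V) :
    FockSpace G →ₗ[ℂ] FockSpace G where
  toFun ψ := WithLp.toLp 2 fun J => ∑ v ∈ J.1, fsign (J.1.erase v) v *
      ψ ⟨J.1.erase v, J.2.mono (Finset.erase_subset v J.1)⟩
  map_add' ψ φ := by
    ext J
    simp only [← Finset.sum_add_distrib, PiLp.add_apply]
    exact Finset.sum_congr rfl fun v _ => mul_add (fsign (J.1.erase v) v)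
      (ψ ⟨J.1.erase v, J.2.mono (Finset.erase_subset v J.1)⟩)
      (φ ⟨J.1.erase v, J.2.mono (Finset.erase_subset v J.1)⟩)
  map_smul' c ψ := by
    ext J
    simp [Finset.mul_sum]
    exact Finset.sum_congr rfl fun v _ => mul_left_comm (fsign (J.1.erase v) v) c
      (ψ ⟨J.1.erase v, J.2.mono (Finset.erase_subset v J.1)⟩)

/-- The Hamiltonian `H = Q Q† + Q† Q` of the supersymmetric hard-core fermion model. -/
noncomputable def hamiltonian {V : Type*} [Fintype V] [LinearOrder V] (G : SimpleGraph V) :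
    FockSpace G →ₗ[ℂ] FockSpace G :=
  supercharge G ∘ₗ LinearMap.adjoint (supercharge G)
    + LinearMap.adjoint (supercharge G) ∘ₗ supercharge G

/-- The fermion-number operator `F`, with `F|I⟩ = |I| · |I⟩`. -/
noncomputable def numberOp {V : Type*} [Fintype V] [LinearOrder V] (G : SimpleGraph V) :
    FockSpace G →ₗ[ℂ] FockSpace G where
  toFun ψ := WithLp.toLp 2 fun I => (I.1.card : ℂ) * ψ I
  map_add' ψ φ := by ext I; simp [mul_add]
  map_smul' c ψ := by ext I; simp [mul_left_comm]

/-- The bosonic subspace: the span of the basis states `|I⟩` with `|I|` even. -/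
noncomputable def bosonic {V : Type*} [Fintype V] [LinearOrder V] (G : SimpleGraph V) :
    Submodule ℂ (FockSpace G) :=
  Submodule.span ℂ
    {e : FockSpace G | ∃ I : IndepSet G, Even I.1.card ∧ e = EuclideanSpace.single I 1}

/-- The fermionic subspace: the span of the basis states `|I⟩` with `|I|` odd. -/
noncomputable def fermionic {V : Type*} [Fintype V] [LinearOrder V] (G : SimpleGraph V) :
    Submodule ℂ (FockSpace G) :=
  Submodule.span ℂ
    {e : FockSpace G | ∃ I : IndepSet G, Odd I.1.card ∧ e = EuclideanSpace.single I 1}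

lemma wi_fsign_erase_ge {V : Type*} [LinearOrder V] (K : Finset V) (v w : V) (h : ¬ v < w) :
    fsign (K.erase v) w = fsign K w := by
  unfold fsign
  congr 2
  ext x
  simp only [Finset.mem_filter, Finset.mem_erase]
  constructor
  · rintro ⟨⟨_, a⟩, b⟩; exact ⟨a, b⟩
  · rintro ⟨a, b⟩
    exact ⟨⟨fun e => h (e ▸ b), a⟩, b⟩

lemma wi_fsign_erase_lt {V : Type*} [LinearOrder V] (K : Finset V) (v w : V) (h : v < w)
    (hv : v ∈ K) : fsign (K.erase v) w = - fsign K w := by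
  unfold fsign
  rw [Finset.filter_erase, ← Finset.card_erase_add_one
    (s := K.filter (· < w)) (a := v) (Finset.mem_filter.2 ⟨hv, h⟩), pow_succ]
  ring

lemma wi_sign {V : Type*} [LinearOrder V] (J : Finset V) (v w : V) (hv : v ∈ J) (hw : w ∈ J)
    (hne : v ≠ w) :
    fsign (J.erase v) v * fsign ((J.erase v).erase w) w
      = - (fsign (J.erase w) w * fsign ((J.erase w).erase v) v) := by
  have h0 : ∀ (K : Finset V) (x : V), fsign (K.erase x) x = fsign K x :=
    fun K x => wi_fsign_erase_ge K x x (lt_irrefl x)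
  simp only [h0]
  rcases lt_or_gt_of_ne hne with h | h
  · rw [wi_fsign_erase_lt J v w h hv, wi_fsign_erase_ge J w v h.not_gt]; ring
  · rw [wi_fsign_erase_lt J w v h hw, wi_fsign_erase_ge J v w h.not_gt]; ring

lemma wi_supercharge_apply {V : Type*} [Fintype V] [LinearOrder V] (G : SimpleGraph V)
    (ψ : FockSpace G) (J : IndepSet G) :
    supercharge G ψ J = ∑ v ∈ J.1, fsign (J.1.erase v) v *
      ψ ⟨J.1.erase v, J.2.mono (Finset.erase_subset v J.1)⟩ := rfl

lemma wi_sq {V : Type*} [Fintype V] [LinearOrder V] (G : SimpleGraph V)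
    (ψ : FockSpace G) : supercharge G (supercharge G ψ) = 0 := by
  classical
  ext J
  let g : Finset V → ℂ := fun I => if h : Indep G I then ψ ⟨I, h⟩ else 0
  let f : V → V → ℂ := fun v w =>
    fsign (J.1.erase v) v * fsign ((J.1.erase v).erase w) w * g ((J.1.erase v).erase w)
  have hf : ∀ v ∈ J.1, ∀ w ∈ J.1, v ≠ w → f v w = - f w v := by
    intro v hv w hw hne
    simp only [f]
    rw [wi_sign J.1 v w hv hw hne, Finset.erase_right_comm (a := v) (b := w)]
    ring
  have e1 : supercharge G (supercharge G ψ) J = ∑ v ∈ J.1, ∑ w ∈ J.1.erase v, f v w := by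
    rw [wi_supercharge_apply]
    refine Finset.sum_congr rfl fun v hv => ?_
    refine (congrArg (fun z => fsign (J.1.erase v) v * z) (wi_supercharge_apply G ψ
      ⟨J.1.erase v, J.2.mono (Finset.erase_subset v J.1)⟩)).trans ?_
    refine (Finset.mul_sum _ _ _).trans ?_
    refine Finset.sum_congr rfl fun w hw => ?_
    have hI : Indep G ((J.1.erase v).erase w) :=
      J.2.mono ((Finset.erase_subset _ _).trans (Finset.erase_subset _ _))
    simp only [f, g, dif_pos hI]
    ring
  have e2 : ∑ v ∈ J.1, ∑ w ∈ J.1.erase v, f v w = ∑ v ∈ J.1, ∑ w ∈ J.1.erase v, f w v := by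
    apply Finset.sum_comm'
    intro x y
    simp only [Finset.mem_erase]
    tauto
  have e3 : ∑ v ∈ J.1, ∑ w ∈ J.1.erase v, f v w = - ∑ v ∈ J.1, ∑ w ∈ J.1.erase v, f w v := by
    simp only [← Finset.sum_neg_distrib]
    refine Finset.sum_congr rfl fun v hv => Finset.sum_congr rfl fun w hw => ?_
    rw [Finset.mem_erase] at hw
    exact hf v hv w hw.2 (Ne.symm hw.1)
  rw [e1]
  rw [← e2] at e3
  exact self_eq_neg.1 e3

lemma wi_abstract {E : Type*} [NormedAddCommGroup E] [InnerProductSpace ℂ E]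
    [FiniteDimensional ℂ E] (D : E →ₗ[ℂ] E) (hD : D.IsSymmetric) (B F : Submodule ℂ E)
    (hB : ∀ x ∈ B, D x ∈ F) (hF : ∀ x ∈ F, D x ∈ B) :
    (Module.finrank ℂ ↥(LinearMap.ker D ⊓ B) : ℤ) - Module.finrank ℂ ↥(LinearMap.ker D ⊓ F)
      = Module.finrank ℂ B - Module.finrank ℂ F := by
  have h1 : Module.finrank ℂ (B.map D) + Module.finrank ℂ ↥(LinearMap.ker D ⊓ B)
      = Module.finrank ℂ B := by
    have := (D.domRestrict B).finrank_range_add_finrank_ker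
    rw [LinearMap.range_domRestrict, LinearMap.ker_domRestrict] at this
    rw [← this, ← Submodule.finrank_map_subtype_eq B, Submodule.map_comap_subtype, inf_comm]
  have hle : B.map D ≤ F := by
    rintro _ ⟨x, hx, rfl⟩; exact hB x hx
  have h2 := Submodule.finrank_add_inf_finrank_orthogonal hle
  have h3 : (B.map D)ᗮ ⊓ F = LinearMap.ker D ⊓ F := by
    ext x
    simp only [Submodule.mem_inf, LinearMap.mem_ker, Submodule.mem_orthogonal]
    refine and_congr_left fun hx => ⟨fun h => ?_, fun h => ?_⟩
    · have := h (D (D x)) ⟨D x, hF x hx, rfl⟩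
      rw [hD] at this
      exact inner_self_eq_zero.1 this
    · rintro _ ⟨y, hy, rfl⟩
      rw [hD, h, inner_zero_right]
  rw [h3] at h2
  omega

lemma wi_ker {E : Type*} [NormedAddCommGroup E] [InnerProductSpace ℂ E]
    [FiniteDimensional ℂ E] (Q : E →ₗ[ℂ] E) (hQ : ∀ x, Q (Q x) = 0) :
    LinearMap.ker (Q ∘ₗ LinearMap.adjoint Q + LinearMap.adjoint Q ∘ₗ Q)
      = LinearMap.ker (Q + LinearMap.adjoint Q) := by
  have hQ' : ∀ x, LinearMap.adjoint Q (LinearMap.adjoint Q x) = 0 := by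
    intro x
    rw [← inner_self_eq_zero (𝕜 := ℂ), LinearMap.adjoint_inner_left,
      LinearMap.adjoint_inner_left, hQ, inner_zero_right]
  have hS : (Q + LinearMap.adjoint Q).IsSymmetric := by
    intro x y
    simp only [LinearMap.add_apply, inner_add_left, inner_add_right,
      LinearMap.adjoint_inner_left, LinearMap.adjoint_inner_right]
    ring
  have hDD : ∀ x, (Q ∘ₗ LinearMap.adjoint Q + LinearMap.adjoint Q ∘ₗ Q) x
      = (Q + LinearMap.adjoint Q) ((Q + LinearMap.adjoint Q) x) := by
    intro x
    simp [hQ, hQ']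
  ext x
  rw [LinearMap.mem_ker, LinearMap.mem_ker, hDD]
  constructor
  · intro h
    rw [← inner_self_eq_zero (𝕜 := ℂ), hS, h, inner_zero_right]
  · intro h
    rw [h, map_zero]

lemma wi_mem_span {ι : Type*} [Fintype ι] [DecidableEq ι] (P : ι → Prop)
    (ψ : EuclideanSpace ℂ ι) :
    ψ ∈ Submodule.span ℂ {e : EuclideanSpace ℂ ι | ∃ I, P I ∧ e = EuclideanSpace.single I 1}
      ↔ ∀ I, ¬ P I → ψ I = 0 := by
  constructor
  · intro h I hI
    induction h using Submodule.span_induction with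
    | mem x hx =>
      obtain ⟨J, hJ, rfl⟩ := hx
      have : I ≠ J := fun e => hI (e ▸ hJ)
      simp [this]
    | zero => rfl
    | add x y _ _ hx hy => simp [hx, hy]
    | smul a x _ hx => simp [hx]
  · intro h
    have : ψ = ∑ I, ψ I • EuclideanSpace.single I (1 : ℂ) := by
      ext J
      simp [Finset.sum_apply, Pi.single_apply]
    rw [this]
    refine Submodule.sum_mem _ fun I _ => ?_
    by_cases hI : P I
    · exact Submodule.smul_mem _ _ (Submodule.subset_span ⟨I, hI, rfl⟩)
    · rw [h I hI, zero_smul]; exact Submodule.zero_mem _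

lemma wi_finrank_span {ι : Type*} [Fintype ι] [DecidableEq ι] (P : ι → Prop) [DecidablePred P] :
    Module.finrank ℂ (Submodule.span ℂ
      {e : EuclideanSpace ℂ ι | ∃ I, P I ∧ e = EuclideanSpace.single I 1})
      = (Finset.univ.filter P).card := by
  have hs : {e : EuclideanSpace ℂ ι | ∃ I, P I ∧ e = EuclideanSpace.single I 1}
      = Set.range (fun I : {I // P I} => EuclideanSpace.basisFun ι ℂ I.1) := by
    ext e
    simp [eq_comm]
  rw [hs, finrank_span_eq_card, Fintype.card_subtype]
  exact (EuclideanSpace.basisFun ι ℂ).orthonormal.linearIndependent.comp _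
    Subtype.val_injective

lemma wi_Q_parity {V : Type*} [Fintype V] [LinearOrder V] (G : SimpleGraph V)
    (ψ : FockSpace G) :
    (ψ ∈ bosonic G → supercharge G ψ ∈ fermionic G) ∧
    (ψ ∈ fermionic G → supercharge G ψ ∈ bosonic G) := by
  unfold bosonic fermionic
  simp only [wi_mem_span]
  constructor
  all_goals
    intro h I hI
    rw [wi_supercharge_apply]
    refine Finset.sum_eq_zero fun v hv => ?_
    refine mul_eq_zero_of_right _ (h ⟨I.1.erase v, I.2.mono (Finset.erase_subset v I.1)⟩ ?_)
    have := Finset.card_erase_add_one hv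
    rw [← this] at hI
    grind

lemma wi_inner_parity {V : Type*} [Fintype V] [LinearOrder V] (G : SimpleGraph V)
    (ψ φ : FockSpace G) (hψ : ψ ∈ bosonic G) (hφ : φ ∈ fermionic G) :
    inner ℂ ψ φ = 0 := by
  unfold bosonic at hψ
  unfold fermionic at hφ
  rw [wi_mem_span] at hψ hφ
  rw [PiLp.inner_apply]
  refine Finset.sum_eq_zero fun I _ => ?_
  by_cases h : Even I.1.card
  · rw [hφ I (by simpa using h), inner_zero_right]
  · rw [hψ I h, inner_zero_left]

lemma wi_single {V : Type*} [Fintype V] [LinearOrder V] (G : SimpleGraph V)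
    (ψ : FockSpace G) (I : IndepSet G) :
    LinearMap.adjoint (supercharge G) ψ I
      = inner ℂ (supercharge G (EuclideanSpace.single I 1)) ψ := by
  rw [← LinearMap.adjoint_inner_right, EuclideanSpace.inner_single_left]
  simp

lemma wi_Qadj_parity {V : Type*} [Fintype V] [LinearOrder V] (G : SimpleGraph V)
    (ψ : FockSpace G) :
    (ψ ∈ bosonic G → LinearMap.adjoint (supercharge G) ψ ∈ fermionic G) ∧
    (ψ ∈ fermionic G → LinearMap.adjoint (supercharge G) ψ ∈ bosonic G) := by
  constructor
  · intro h
    unfold fermionic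
    rw [wi_mem_span]
    intro I hI
    rw [wi_single, ← inner_conj_symm, wi_inner_parity G _ _ h, map_zero]
    exact (wi_Q_parity G _).1 (Submodule.subset_span ⟨I, by simpa using hI, rfl⟩)
  · intro h
    unfold bosonic
    rw [wi_mem_span]
    intro I hI
    rw [wi_single]
    refine wi_inner_parity G _ _ ?_ h
    exact (wi_Q_parity G _).2 (Submodule.subset_span ⟨I, by simpa using hI, rfl⟩)

/-- The Witten index of the supersymmetric hard-core fermion model equals
the independence polynomial of the graph evaluated at `−1`:
`dim(ker H ∩ bosonic) − dim(ker H ∩ fermionic) = Σ_I (−1)^{|I|}`, the sum running over all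
independent sets `I` of `G` (including the empty set). -/
theorem witten_index_eq_independence_polynomial
    {V : Type*} [Fintype V] [LinearOrder V] (G : SimpleGraph V) :
    (Module.finrank ℂ ↥(LinearMap.ker (hamiltonian G) ⊓ bosonic G) : ℤ)
      - Module.finrank ℂ ↥(LinearMap.ker (hamiltonian G) ⊓ fermionic G)
      = ∑ I : IndepSet G, (-1 : ℤ) ^ I.1.card := by
  classical
  have hS : (supercharge G + LinearMap.adjoint (supercharge G)).IsSymmetric := by
    intro x y
    simp only [LinearMap.add_apply, inner_add_left, inner_add_right,
      LinearMap.adjoint_inner_left, LinearMap.adjoint_inner_right]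
    ring
  unfold hamiltonian
  rw [wi_ker _ (wi_sq G), wi_abstract _ hS (bosonic G) (fermionic G)
    (fun x hx => Submodule.add_mem _ ((wi_Q_parity G x).1 hx) ((wi_Qadj_parity G x).1 hx))
    (fun x hx => Submodule.add_mem _ ((wi_Q_parity G x).2 hx) ((wi_Qadj_parity G x).2 hx))]
  unfold bosonic fermionic
  rw [wi_finrank_span (fun I : IndepSet G => Even I.1.card),
    wi_finrank_span (fun I : IndepSet G => Odd I.1.card), Finset.card_filter, Finset.card_filter]
  push_cast
  rw [← Finset.sum_sub_distrib]
  refine Finset.sum_congr rfl fun I _ => ?_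
  rcases Nat.even_or_odd I.1.card with h | h
  · simp [h, h.neg_one_pow]
  · simp [h, h.neg_one_pow]
end
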